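/- Every countable scattered chain of finite Hausdorff rank has finite big Ramsey degrees; that is, if C is a countable scattered chain with r_H(C) < ω, then for every n ≥ 1 there exists t ∈ ℕ such that C ⟶ (C)^{n}_{k,t} for every k ∈ ℕ. -/

import Mathlib

/-!
The proof has two halves.

*Ramsey half.*  Call a chain nice (`NiceData`) if the strictly increasing maps `ℕ → ℕ` act on it by
order embeddings in such a way that every point depends on a bounded number of natural-number
coordinates, and only finitely many points have all their coordinates below a given `N`.  The
one-point chain, `ℕ` and `ℕᵒᵈ` are nice, and niceness passes to finite lexicographic sums and to
lexicographic products.  An `n`-tuple in a nice chain uses at most `N = n * d` coordinates, so it is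
the image, under the increasing enumeration of some `N`-element set `S`, of one of the finitely many
tuples `g` whose coordinates are below `N`.  A coloring of tuples thus assigns to each `N`-set `S` a
function of `g`.  The infinite Ramsey theorem (`infinite_ramsey`) makes this function independent of
`S ⊆ H` for an infinite set `H`.  Acting by the enumeration of `H` gives a self-embedding on whose
image the color of a tuple depends only on `g` (`NiceData.bigRamsey`), which bounds the number of
colors independently of `k`.

*Structural half.*  For each `n` there is a finite family of nice chains such that every chain in
`H_n` is biembeddable with a finite sum of members of the family (`exists_nice_family`).  For the
induction step write a chain of rank at most `n + 1` as a `ℤ`-indexed sum of finite words over the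
family for `n`.  As the alphabet is finite, all letters occurring far to the right belong to the set
`A` of letters occurring in infinitely many blocks on the right.  That right tail is biembeddable
with `ℕ ×ₗ (Σₗ a ∈ A, F a)`: every finite word over `A` embeds into finitely many copies of
`Σₗ a ∈ A, F a`, and conversely the letters of the product can be found one after another in the
tail.  Left tails are treated dually with `ℕᵒᵈ`, and the remaining middle part is a finite sum.  So
it suffices to add to the family one chain of each of these two shapes for each set `A` of letters.

Finite big Ramsey degrees transfer along biembeddability, which concludes.
-/

universe u v

/-- The chain `A` has big Ramsey degree at most `t` in the chain `C`:
for every finite coloring of the set of order embeddings `A ↪o C` there is an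
order embedding `w : C ↪o C` such that the colors of the compositions `w ∘ f`,
`f : A ↪o C`, take at most `t` values. -/
def BigRamseyDegLE (A : Type u) (C : Type v) [LinearOrder A] [LinearOrder C] (t : ℕ) : Prop :=
  ∀ (k : ℕ) (χ : (A ↪o C) → Fin k), ∃ w : C ↪o C,
    (Set.range fun f : A ↪o C => χ (f.trans w)).ncard ≤ t

/-- A chain is scattered if ℚ does not order-embed into it. -/
def Scattered (C : Type u) [LinearOrder C] : Prop := IsEmpty (ℚ ↪o C)

/-- `InHausdorff n C` says that the chain `C` is order-isomorphic to a member of the level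
`H_n` of the Hausdorff hierarchy: `H_0` consists of the empty and the one-element chain,
and `H_{n+1}` consists of the ℤ-indexed lexicographic sums `Σ_{i ∈ ℤ} S_i` with each
`S_i ∈ ⋃_{m ≤ n} H_m`.  This is encoded via a monotone map `c : C → ℤ` whose fibers
(with the induced order) are order-isomorphic to members of lower levels of the hierarchy. -/
def InHausdorff : ℕ → (C : Type u) → [LinearOrder C] → Prop
  | 0, C, _ => Subsingleton C
  | n+1, C, _ => ∃ c : C → ℤ, Monotone c ∧
      ∀ i : ℤ, ∃ m : ℕ, ∃ _ : m ≤ n, InHausdorff m {x : C // c x = i}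
  termination_by n => n
  decreasing_by omega

/-- The chain `C` has finite Hausdorff rank: it is order-isomorphic to a member of `H_n`
for some `n < ω`. -/
def FiniteHausdorffRank (C : Type u) [LinearOrder C] : Prop := ∃ n : ℕ, InHausdorff n C

/-- Two chains are biembeddable if each order-embeds into the other. -/
def Biembeddable (A : Type u) (C : Type v) [LinearOrder A] [LinearOrder C] : Prop :=
  Nonempty (A ↪o C) ∧ Nonempty (C ↪o A)

/-- A chain `L` is additively indecomposable if whenever `L` is partitioned into an initial
segment `A` and the complementary final segment, `L` order-embeds into `A` or into the
complement of `A`. -/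
def AddIndecomposable (L : Type u) [LinearOrder L] : Prop :=
  ∀ A : Set L, (∀ x ∈ A, ∀ y, y ≤ x → y ∈ A) →
    Nonempty (L ↪o A) ∨ Nonempty (L ↪o (Aᶜ : Set L))

/-! ### The infinite Ramsey theorem -/

/-- Limits along a nonprincipal ultrafilter lower the arity of a coloring of finite sets by one. -/
theorem exists_ultrafilter_limit {κ : Type} [Finite κ] (χ : Finset ℕ → κ) :
    ∃ ψ : Finset ℕ → κ, ∀ S, ∀ᶠ y in (Filter.hyperfilter ℕ : Filter ℕ),
      χ (insert y S) = ψ S := by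
  have : ∀ S : Finset ℕ, ∃ c, ∀ᶠ y in (Filter.hyperfilter ℕ : Filter ℕ), χ (insert y S) = c := by
    intro S
    obtain ⟨c, hc⟩ := Ultrafilter.eq_pure_of_finite
      ((Filter.hyperfilter ℕ).map fun y => χ (insert y S))
    refine ⟨c, ?_⟩
    have h : ({c} : Set κ) ∈ (Filter.hyperfilter ℕ).map fun y => χ (insert y S) := by
      rw [hc]; exact Ultrafilter.mem_pure.2 rfl
    exact h
  choose ψ hψ using this
  exact ⟨ψ, hψ⟩

/-- The infinite Ramsey theorem for `N`-element subsets of `ℕ`.  With `ψ d` the `d`-fold iterated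
ultrafilter limit of `χ`, a set `H` is maximal among those in which every `S` with at most `N`
elements satisfies `ψ (N - |S|) S = ψ N ∅`; a finite such set could be extended by a generic
point. -/
theorem infinite_ramsey {κ : Type} [Finite κ] (N : ℕ) (χ : Finset ℕ → κ) :
    ∃ H : Set ℕ, H.Infinite ∧ ∃ c, ∀ S : Finset ℕ, (S : Set ℕ) ⊆ H → S.card = N → χ S = c := by
  choose D hD using fun χ : Finset ℕ → κ => exists_ultrafilter_limit χ
  let ψ : ℕ → Finset ℕ → κ := fun d => D^[d] χ
  have hψ : ∀ d S, ∀ᶠ y in (Filter.hyperfilter ℕ : Filter ℕ), ψ d (insert y S) = ψ (d + 1) S := by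
    intro d S
    simp only [ψ, Function.iterate_succ_apply']
    exact hD _ S
  let Inv : Set (Set ℕ) := {H | ∀ S : Finset ℕ, (S : Set ℕ) ⊆ H → S.card ≤ N →
    ψ (N - S.card) S = ψ N ∅}
  obtain ⟨H, hH⟩ : ∃ H, Maximal (· ∈ Inv) H := by
    refine zorn_subset Inv fun c hc hch => ?_
    rcases c.eq_empty_or_nonempty with rfl | hne
    · refine ⟨∅, ?_, by simp⟩
      intro S hS _
      obtain rfl : S = ∅ := by simpa using hS
      simp
    · refine ⟨⋃₀ c, ?_, fun s hs => Set.subset_sUnion_of_mem hs⟩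
      intro S hS hcard
      obtain ⟨t, ht, hSt⟩ := DirectedOn.exists_mem_subset_of_finset_subset_biUnion hne
        (f := id) hch.directedOn (s := S) (by simpa [Set.sUnion_eq_biUnion] using hS)
      exact hc ht S hSt hcard
  refine ⟨H, fun hfin => ?_, ψ N ∅, fun S hS hcard => ?_⟩
  · lift H to Finset ℕ using hfin
    have h1 : ∀ᶠ y in (Filter.hyperfilter ℕ : Filter ℕ), y ∉ H :=
      Set.Finite.compl_mem_hyperfilter (H.finite_toSet)
    have h2 : ∀ᶠ y in (Filter.hyperfilter ℕ : Filter ℕ), ∀ S ∈ H.powerset,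
        ∀ d ∈ Finset.range N, ψ d (insert y S) = ψ (d + 1) S := by
      simp only [Filter.eventually_all_finset]
      exact fun S _ d _ => hψ d S
    obtain ⟨y, hy, hext⟩ := (h1.and h2).exists
    have hins : insert y (H : Set ℕ) ∈ Inv := by
      intro S hS hcard
      by_cases hyS : y ∈ S
      · have hsub : S.erase y ⊆ H := by
          intro z hz
          have := hS (Finset.mem_of_mem_erase hz)
          simpa [Finset.ne_of_mem_erase hz] using this
        have hc := Finset.card_erase_add_one hyS
        have e := hext (S.erase y) (Finset.mem_powerset.2 hsub) (N - S.card)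
          (Finset.mem_range.2 (by omega))
        rw [Finset.insert_erase hyS] at e
        rw [e, ← hH.prop (S.erase y) (by exact_mod_cast hsub) (by omega)]
        congr 1
        omega
      · refine hH.prop S (fun z hz => ?_) hcard
        rcases hS hz with rfl | h
        · exact absurd hz hyS
        · exact h
    have := hH.le_of_ge hins (Set.subset_insert _ _) (Set.mem_insert y _)
    exact hy (by simpa using this)
  · have := hH.prop S hS hcard.le
    rwa [hcard, Nat.sub_self] at this

/-! ### Big Ramsey degrees of nice chains -/

/-- A chain whose points are described by boundedly many natural-number coordinates together with
a bounded amount of finite data, so that strictly increasing self-maps of `ℕ` act on it by order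
embeddings. -/
structure NiceData (X : Type) [LinearOrder X] where
  /-- The action of strictly increasing maps `ℕ → ℕ`. -/
  act : (ℕ ↪o ℕ) → X ↪o X
  act_trans : ∀ e f x, act (e.trans f) x = act f (act e x)
  /-- A bound on the number of coordinates of a point. -/
  d : ℕ
  /-- The set of coordinates of a point. -/
  supp : X → Finset ℕ
  card_supp : ∀ x, (supp x).card ≤ d
  /-- `B N` is the set of points all of whose coordinates are below `N`. -/
  B : ℕ → Set X
  finB : ∀ N, (B N).Finite
  loc : ∀ N (e e' : ℕ ↪o ℕ), (∀ i < N, e i = e' i) → ∀ x ∈ B N, act e x = act e' x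
  cov : ∀ N (e : ℕ ↪o ℕ) x, (∀ a ∈ supp x, ∃ i < N, e i = a) → ∃ y ∈ B N, act e y = x

/-- The increasing enumeration of a finite set extends to a strictly increasing map `ℕ → ℕ`. -/
theorem exists_extend {N : ℕ} (S : Finset ℕ) (hS : S.card = N) :
    ∃ e : ℕ ↪o ℕ, ∀ i : Fin N, e i = S.orderEmbOfFin hS i := by
  refine ⟨OrderEmbedding.ofStrictMono
    (fun k => if h : k < N then S.orderEmbOfFin hS ⟨k, h⟩ else S.sup id + 1 + k) ?_, ?_⟩
  · intro a b hab
    dsimp only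
    split_ifs with h1 h2 h2
    · exact (S.orderEmbOfFin hS).lt_iff_lt.2 (Fin.mk_lt_mk.2 hab)
    · have := Finset.le_sup (f := id) (S.orderEmbOfFin_mem hS ⟨a, h1⟩)
      simp only [id] at this
      omega
    · omega
    · omega
  · exact fun i => dif_pos i.2

/-- Nice chains have finite big Ramsey degrees: with `N = n * D.d`, the number of `n`-tuples in
`D.B N` bounds the degree. -/
theorem NiceData.bigRamsey {X : Type} [LinearOrder X] (D : NiceData X) (n : ℕ) :
    ∃ t : ℕ, ∀ (k : ℕ) (χ : (Fin n ↪o X) → Fin k),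
      ∃ w : X ↪o X, (Set.range fun f : Fin n ↪o X => χ (f.trans w)).ncard ≤ t := by
  classical
  set N := n * D.d with hN
  let G := {g : Fin n ↪o X // ∀ i, g i ∈ D.B N}
  have : Finite (D.B N) := D.finB N
  have : Finite G := by
    refine Finite.of_injective (β := Fin n → D.B N) (fun g i => ⟨g.1 i, g.2 i⟩) ?_
    intro g g' h
    ext i
    exact congrArg Subtype.val (congrFun h i)
  refine ⟨Nat.card G, fun k χ => ?_⟩
  choose ext hext using fun (S : Finset ℕ) (hS : S.card = N) => exists_extend S hS
  -- The second branch is irrelevant: only sets of size `N` are ever used.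
  let c : Finset ℕ → (G → Fin k) := fun S g =>
    if hS : S.card = N then χ (g.1.trans (D.act (ext S hS))) else χ g.1
  obtain ⟨H, hinf, col, hcol⟩ := infinite_ramsey N c
  have := hinf.to_subtype
  let h : ℕ ↪o ℕ := Nat.orderEmbeddingOfSet H
  have hh : ∀ i, h i ∈ H := fun i => by
    rw [← Nat.orderEmbeddingOfSet_range H]; exact ⟨i, rfl⟩
  refine ⟨D.act h, ?_⟩
  have hsub : (Set.range fun f : Fin n ↪o X => χ (f.trans (D.act h))) ⊆ Set.range col := by
    rintro _ ⟨f, rfl⟩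
    let S0 : Finset ℕ := Finset.univ.biUnion fun i => D.supp (f i)
    have hS0 : S0.card ≤ N := by
      refine Finset.card_biUnion_le.trans ?_
      refine (Finset.sum_le_card_nsmul _ _ D.d fun i _ => D.card_supp _).trans ?_
      simp [hN]
    obtain ⟨S, hS0S, hS⟩ := Infinite.exists_superset_card_eq S0 N hS0
    have hcov : ∀ i, ∃ y ∈ D.B N, D.act (ext S hS) y = f i := by
      intro i
      refine D.cov N _ _ fun a ha => ?_
      have haS : a ∈ (S : Set ℕ) := hS0S (Finset.mem_biUnion.2 ⟨i, Finset.mem_univ _, ha⟩)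
      rw [← S.range_orderEmbOfFin hS] at haS
      obtain ⟨j, rfl⟩ := haS
      exact ⟨j, j.2, hext S hS j⟩
    -- `f` is the image under the enumeration of `S` of a tuple `g` with coordinates below `N`.
    choose g hgB hg using hcov
    have hgm : StrictMono g := by
      intro i j hij
      rw [← (D.act (ext S hS)).lt_iff_lt, hg, hg]
      exact f.strictMono hij
    let g' : G := ⟨OrderEmbedding.ofStrictMono g hgm, hgB⟩
    refine ⟨g', ?_⟩
    let T := S.map h.toEmbedding
    have hT : T.card = N := by simp [T, hS]
    rw [← hcol T (by
      intro x hx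
      obtain ⟨y, _, rfl⟩ := Finset.mem_map.1 (Finset.mem_coe.1 hx)
      exact hh y) hT]
    simp only [c, hT, dif_pos]
    congr 1
    ext i
    change D.act (ext T hT) (g i) = D.act h (f i)
    rw [← hg i, ← D.act_trans]
    refine D.loc N _ _ (fun j hj => ?_) _ (hgB i)
    rw [hext T hT ⟨j, hj⟩]
    -- On `Fin N`, `h` after the enumeration of `S` is the enumeration of `T = h '' S`.
    have := Finset.orderEmbOfFin_unique hT (f := fun j : Fin N => h (S.orderEmbOfFin hS j))
      (fun x => Finset.mem_map.2 ⟨_, S.orderEmbOfFin_mem hS x, rfl⟩)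
      (fun x y hxy => h.strictMono ((S.orderEmbOfFin hS).strictMono hxy))
    rw [← this]
    exact congrArg h (hext S hS ⟨j, hj⟩).symm
  refine (Set.ncard_le_ncard hsub (Set.toFinite _)).trans ?_
  rw [← Nat.card_coe_set_eq]
  exact Finite.card_range_le col

/-! ### Lexicographic sums and biembeddability -/

section LexSum

variable {I : Type*} [LinearOrder I] {A : I → Type*} [∀ i, LinearOrder (A i)]
  {D : Type*} [LinearOrder D]

theorem lexSum_lt_iff {x y : Σₗ i, A i} :
    x < y ↔ x.1 < y.1 ∨ ∃ h : x.1 = y.1, h.rec x.2 < y.2 := Sigma.Lex.lt_def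

theorem lexSum_mk_lt {i : I} {x y : A i} :
    (toLex ⟨i, x⟩ : Σₗ i, A i) < toLex ⟨i, y⟩ ↔ x < y := by
  constructor
  · intro h
    rcases lexSum_lt_iff.1 h with h | ⟨_, h⟩
    · exact absurd h (lt_irrefl i)
    · exact h
  · exact fun h => lexSum_lt_iff.2 (.inr ⟨rfl, h⟩)

theorem lexSum_mk_lt_of_lt {i j : I} (h : i < j) (x : A i) (y : A j) :
    (toLex ⟨i, x⟩ : Σₗ i, A i) < toLex ⟨j, y⟩ := lexSum_lt_iff.2 (.inl h)

/-- The inclusion of a summand into a lexicographic sum. -/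
def lexSumMk (i : I) : A i ↪o Σₗ i, A i :=
  OrderEmbedding.ofStrictMono (fun x => toLex ⟨i, x⟩) fun _ _ h => lexSum_mk_lt.2 h

/-- An order embedding out of a lexicographic sum, glued from embeddings of the summands whose
images are ordered like the indices. -/
def lexSumLift (f : ∀ i, A i ↪o D) (hf : ∀ i j, i < j → ∀ x y, f i x < f j y) :
    (Σₗ i, A i) ↪o D :=
  OrderEmbedding.ofStrictMono (fun x => f x.1 x.2) <| by
    rintro ⟨i, x⟩ ⟨j, y⟩ h
    rcases lexSum_lt_iff.1 h with h | ⟨h', h⟩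
    · exact hf _ _ h _ _
    · obtain rfl : i = j := h'
      exact (f i).lt_iff_lt.2 h

@[simp] theorem lexSumLift_mk (f : ∀ i, A i ↪o D) (hf : ∀ i j, i < j → ∀ x y, f i x < f j y)
    (i : I) (x : A i) : lexSumLift f hf (toLex ⟨i, x⟩) = f i x := rfl

/-- An order embedding out of a chain `C`, glued from embeddings of the fibers of a monotone map
`c : C → I` whose images are ordered like the indices. -/
def fiberLift {C : Type*} [LinearOrder C] (c : C → I) (hc : Monotone c)
    (f : ∀ i, {x // c x = i} ↪o D) (hf : ∀ i j, i < j → ∀ x y, f i x < f j y) : C ↪o D :=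
  OrderEmbedding.ofStrictMono (fun x => f (c x) ⟨x, rfl⟩) <| by
    intro x y h
    rcases (hc h.le).lt_or_eq with h' | h'
    · exact hf _ _ h' _ _
    · have : ∀ i (hi : c x = i), f (c x) ⟨x, rfl⟩ = f i ⟨x, hi⟩ := by
        rintro _ rfl; rfl
      change f (c x) ⟨x, rfl⟩ < f (c y) ⟨y, rfl⟩
      rw [this _ h']
      exact (f (c y)).lt_iff_lt.2 h

end LexSum

theorem Biembeddable.refl (A : Type*) [LinearOrder A] : Biembeddable A A :=
  ⟨⟨RelEmbedding.refl _⟩, ⟨RelEmbedding.refl _⟩⟩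

theorem Biembeddable.trans {A B C : Type*} [LinearOrder A] [LinearOrder B] [LinearOrder C]
    (h : Biembeddable A B) (h' : Biembeddable B C) : Biembeddable A C := by
  obtain ⟨⟨f⟩, ⟨g⟩⟩ := h
  obtain ⟨⟨f'⟩, ⟨g'⟩⟩ := h'
  exact ⟨⟨f.trans f'⟩, ⟨g'.trans g⟩⟩

theorem biembeddable_lexSum_of_fibers {C I : Type*} [LinearOrder C] [LinearOrder I]
    {A : I → Type*} [∀ i, LinearOrder (A i)] (c : C → I) (hc : Monotone c)
    (h : ∀ i, Biembeddable {x // c x = i} (A i)) : Biembeddable C (Σₗ i, A i) := by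
  choose f g using h
  refine ⟨⟨fiberLift c hc (fun i => (f i).some.trans (lexSumMk i)) fun i j hij x y =>
    lexSum_mk_lt_of_lt hij _ _⟩,
    ⟨lexSumLift (fun i => (g i).some.trans (OrderEmbedding.subtype _)) fun i j hij x y => ?_⟩⟩
  refine lt_of_not_ge fun hle => ?_
  have := hc hle
  have h1 := ((g i).some x).2
  have h2 := ((g j).some y).2
  change c ((g j).some y).1 ≤ c ((g i).some x).1 at this
  rw [h1, h2] at this
  exact absurd hij (not_lt.2 this)

theorem biembeddable_lexSum_assoc {I : Type*} [LinearOrder I] {P : I → Type*}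
    [∀ i, LinearOrder (P i)] {A : ∀ i, P i → Type*} [∀ i p, LinearOrder (A i p)] :
    Biembeddable (Σₗ i, Σₗ p, A i p) (Σₗ x : (Σₗ i, P i), A x.1 x.2) := by
  refine ⟨⟨lexSumLift (fun i => lexSumLift (fun p =>
    lexSumMk (A := fun x : (Σₗ i, P i) => A x.1 x.2) (toLex ⟨i, p⟩)) ?_) ?_⟩,
    ⟨lexSumLift (fun x => (lexSumMk (A := A x.1) x.2).trans
      (lexSumMk (A := fun i => Σₗ p, A i p) x.1)) ?_⟩⟩
  · intro p q hpq x y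
    exact lexSum_mk_lt_of_lt (lexSum_mk_lt.2 hpq) _ _
  · rintro i j hij ⟨p, x⟩ ⟨q, y⟩
    exact lexSum_mk_lt_of_lt (lexSum_mk_lt_of_lt hij _ _) _ _
  · rintro ⟨i, p⟩ ⟨j, q⟩ h x y
    rcases lexSum_lt_iff.1 h with h | ⟨h', h⟩
    · exact lexSum_mk_lt_of_lt h _ _
    · obtain rfl : i = j := h'
      exact lexSum_mk_lt.2 (lexSum_mk_lt_of_lt h _ _)

/-! ### Construction of nice chains -/

/-- The one-point chain has no coordinates. -/
def NiceData.unit : NiceData Unit where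
  act _ := RelEmbedding.refl _
  act_trans _ _ _ := rfl
  d := 0
  supp _ := ∅
  card_supp _ := le_rfl
  B _ := Set.univ
  finB _ := Set.toFinite _
  loc _ _ _ _ _ _ := rfl
  cov _ _ x _ := ⟨x, trivial, rfl⟩

/-- A natural number is its own single coordinate. -/
def NiceData.nat : NiceData ℕ where
  act e := e
  act_trans _ _ _ := rfl
  d := 1
  supp x := {x}
  card_supp _ := by simp
  B N := Set.Iio N
  finB N := Set.finite_Iio N
  loc _ _ _ h x hx := h x hx
  cov N e x h := by
    obtain ⟨i, hi, rfl⟩ := h x (by simp)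
    exact ⟨i, hi, rfl⟩

/-- The reversed order on `ℕ` is nice with the same coordinates as `ℕ`. -/
def NiceData.natDual : NiceData ℕᵒᵈ where
  act e := e.dual
  act_trans _ _ _ := rfl
  d := 1
  supp x := {OrderDual.ofDual x}
  card_supp _ := by simp
  B N := OrderDual.toDual '' Set.Iio N
  finB N := (Set.finite_Iio N).image _
  loc _ _ _ h x hx := by
    obtain ⟨y, hy, rfl⟩ := hx
    exact congrArg OrderDual.toDual (h y hy)
  cov N e x h := by
    obtain ⟨i, hi, h'⟩ := h (OrderDual.ofDual x) (by simp)
    exact ⟨OrderDual.toDual i, ⟨i, hi, rfl⟩, congrArg OrderDual.toDual h'⟩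

/-- The lexicographic product, written as a sum of copies of `Y` indexed by `X`, with the
coordinates of both entries. -/
noncomputable def NiceData.prod {X Y : Type} [LinearOrder X] [LinearOrder Y] (D : NiceData X)
    (E : NiceData Y) : NiceData (Σₗ _ : X, Y) where
  act e := lexSumLift (fun x => (E.act e).trans (lexSumMk (A := fun _ : X => Y) (D.act e x)))
    fun i j hij x y => lexSum_mk_lt_of_lt ((D.act e).lt_iff_lt.2 hij) _ _
  act_trans e f x := by
    obtain ⟨x, y⟩ := x
    exact congrArg₂ (fun a b => (toLex ⟨a, b⟩ : Σₗ _ : X, Y)) (D.act_trans e f x)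
      (E.act_trans e f y)
  d := D.d + E.d
  supp x := D.supp x.1 ∪ E.supp x.2
  card_supp x := (Finset.card_union_le _ _).trans (add_le_add (D.card_supp _) (E.card_supp _))
  B N := (fun p : X × Y => toLex ⟨p.1, p.2⟩) '' (D.B N ×ˢ E.B N)
  finB N := ((D.finB N).prod (E.finB N)).image _
  loc N e e' h x hx := by
    obtain ⟨⟨x, y⟩, ⟨hx, hy⟩, rfl⟩ := hx
    change (toLex ⟨D.act e x, E.act e y⟩ : Σₗ _ : X, Y) = toLex ⟨D.act e' x, E.act e' y⟩
    rw [D.loc N e e' h x hx, E.loc N e e' h y hy]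
  cov N e x h := by
    obtain ⟨x, y⟩ := x
    obtain ⟨x', hx', rfl⟩ := D.cov N e x fun a ha => h a (Finset.mem_union_left _ ha)
    obtain ⟨y', hy', rfl⟩ := E.cov N e y fun a ha => h a (Finset.mem_union_right _ ha)
    exact ⟨_, ⟨(x', y'), ⟨hx', hy'⟩, rfl⟩, rfl⟩

/-- A finite sum of nice chains is nice; the action preserves the index of the summand. -/
noncomputable def NiceData.finSum {P : Type} [LinearOrder P] [Finite P] {A : P → Type}
    [∀ p, LinearOrder (A p)] (D : ∀ p, NiceData (A p)) : NiceData (Σₗ p, A p) where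
  act e := lexSumLift (fun p => ((D p).act e).trans (lexSumMk p))
    fun i j hij x y => lexSum_mk_lt_of_lt hij _ _
  act_trans e f x := by
    obtain ⟨p, x⟩ := x
    exact congrArg (fun b => (toLex ⟨p, b⟩ : Σₗ p, A p)) ((D p).act_trans e f x)
  d := (Set.finite_range fun p => (D p).d).bddAbove.some
  supp x := (D x.1).supp x.2
  card_supp x := ((D x.1).card_supp _).trans
    ((Set.finite_range fun p => (D p).d).bddAbove.some_mem ⟨x.1, rfl⟩)
  B N := ⋃ p, (fun x => toLex ⟨p, x⟩) '' (D p).B N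
  finB N := Set.finite_iUnion fun p => ((D p).finB N).image _
  loc N e e' h x hx := by
    obtain ⟨p, x, hx', rfl⟩ := Set.mem_iUnion.1 hx
    exact congrArg (fun b => (toLex ⟨p, b⟩ : Σₗ p, A p)) ((D p).loc N e e' h x hx')
  cov N e x h := by
    obtain ⟨p, x⟩ := x
    obtain ⟨x', hx', rfl⟩ := (D p).cov N e x h
    exact ⟨_, Set.mem_iUnion.2 ⟨p, x', hx', rfl⟩, rfl⟩

/-! ### Tails of type `ω` and `ω*` -/

/-- The two combinatorial properties shared by `ℕ` and `ℕᵒᵈ` that identify tails of `I`-indexed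
sums of words. -/
structure TailOrder (I : Type) [LinearOrder I] : Prop where
  /-- An `I`-indexed lexicographic sum of finite chains embeds into `I`. -/
  pack : ∀ (P : I → Type) [∀ i, LinearOrder (P i)] [∀ i, Finite (P i)],
    ∃ g : ∀ i, P i → I, (∀ i j, i < j → ∀ p q, g i p < g j q) ∧ ∀ i, StrictMono (g i)
  /-- `I ×ₗ A` embeds into `I` with the image of each `(k, a)` in a prescribed infinite set
  depending on `a`, for finite `A`. -/
  spread : ∀ (A : Type) [LinearOrder A] [Finite A] (R : A → I → Prop),
    (∀ a, {i | R a i}.Infinite) → ∃ q : I → A → I, (∀ k a, R a (q k a)) ∧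
      (∀ i j, i < j → ∀ a b, q i a < q j b) ∧ ∀ i, StrictMono (q i)

theorem TailOrder.dual {I : Type} [LinearOrder I] (h : TailOrder I) : TailOrder Iᵒᵈ where
  pack P _ _ := by
    obtain ⟨g, h1, h2⟩ := h.pack fun i => (P (OrderDual.toDual i))ᵒᵈ
    exact ⟨fun i p => OrderDual.toDual (g (OrderDual.ofDual i) (OrderDual.toDual p)),
      fun i j hij p q => h1 (OrderDual.ofDual j) (OrderDual.ofDual i) hij _ _,
      fun i p q hpq => h2 (OrderDual.ofDual i) (a := OrderDual.toDual q) (b := OrderDual.toDual p)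
        hpq⟩
  spread A _ _ R hR := by
    obtain ⟨q, h0, h1, h2⟩ := h.spread Aᵒᵈ (fun a i => R (OrderDual.ofDual a) (OrderDual.toDual i))
      fun a => hR (OrderDual.ofDual a)
    exact ⟨fun i p => OrderDual.toDual (q (OrderDual.ofDual i) (OrderDual.toDual p)),
      fun k a => h0 (OrderDual.ofDual k) (OrderDual.toDual a),
      fun i j hij a b => h1 (OrderDual.ofDual j) (OrderDual.ofDual i) hij _ _,
      fun i a b hab => h2 (OrderDual.ofDual i) (a := OrderDual.toDual b) (b := OrderDual.toDual a)
        hab⟩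

theorem exists_strictMono_fin (A : Type) [LinearOrder A] [Finite A] :
    ∃ (m : ℕ) (e : A → ℕ), StrictMono e ∧ ∀ a, e a < m := by
  have := Fintype.ofFinite A
  let e := (Fintype.orderIsoFinOfCardEq A rfl).symm
  exact ⟨_, fun a => e a, fun a b h => e.lt_iff_lt.2 h, fun a => (e a).2⟩

theorem tailOrder_nat : TailOrder ℕ where
  pack P _ _ := by
    choose r e he hr using fun i => exists_strictMono_fin (P i)
    refine ⟨fun i p => ∑ j ∈ Finset.range i, r j + e i p, fun i j hij p q => ?_,
      fun i p q hpq => Nat.add_lt_add_left (he i hpq) _⟩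
    have h1 : ∑ k ∈ Finset.range (i + 1), r k ≤ ∑ k ∈ Finset.range j, r k :=
      Finset.sum_le_sum_of_subset (Finset.range_subset_range.2 hij)
    rw [Finset.sum_range_succ] at h1
    have := hr i p
    change ∑ k ∈ Finset.range i, r k + e i p < ∑ k ∈ Finset.range j, r k + e j q
    omega
  spread A _ _ R hR := by
    obtain ⟨m, e, he, hm⟩ := exists_strictMono_fin A
    have hfreq : ∀ t : ℕ, ∃ᶠ i in Filter.atTop, ∀ a, e a = t % m → R a i := by
      intro t
      by_cases ha : ∃ a, e a = t % m
      · obtain ⟨a, ha⟩ := ha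
        refine (Nat.frequently_atTop_iff_infinite.2 (hR a)).mono fun i hi b hb => ?_
        rwa [he.injective (hb.trans ha.symm)]
      · push Not at ha
        exact Filter.Frequently.of_forall fun i a h => absurd h (ha a)
    obtain ⟨φ, hφ, h⟩ := Filter.extraction_forall_of_frequently hfreq
    -- `(k, a) ↦ k * m + e a` embeds `ℕ ×ₗ A` into `ℕ`, and `a` is recovered modulo `m`.
    refine ⟨fun k a => φ (k * m + e a), fun k a => h _ a ?_, fun i j hij a b => hφ ?_,
      fun i a b hab => hφ (Nat.add_lt_add_left (he hab) _)⟩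
    · rw [Nat.mul_add_mod_self_right, Nat.mod_eq_of_lt (hm a)]
    · have h1 := hm a
      have h2 : (i + 1) * m ≤ j * m := Nat.mul_le_mul_right _ hij
      rw [Nat.succ_mul] at h2
      omega

/-- A sum of finite words with letters in `A`, in which every letter of `A` occurs in infinitely
many words, is biembeddable with `I` copies of the sum of all letters in `A`. -/
theorem TailOrder.biembeddable {I ι : Type} [LinearOrder I] [LinearOrder ι] [Finite ι]
    (hI : TailOrder I) (F : ι → LinOrd.{0}) (P : I → Type) [∀ i, LinearOrder (P i)]
    [∀ i, Finite (P i)] (w : ∀ i, P i → ι) (A : Set ι) (hA : ∀ i p, w i p ∈ A)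
    (hinf : ∀ a ∈ A, {i | ∃ p, w i p = a}.Infinite) :
    Biembeddable (Σₗ i, Σₗ p : P i, F (w i p)) (Σₗ _ : I, Σₗ a : A, F a.1) := by
  constructor
  · obtain ⟨g, h1, h2⟩ := hI.pack P
    refine ⟨lexSumLift (fun i => lexSumLift (fun p =>
      (lexSumMk (A := fun a : A => F a.1) ⟨w i p, hA i p⟩).trans
        (lexSumMk (A := fun _ : I => Σₗ a : A, F a.1) (g i p))) ?_) ?_⟩
    · intro p q hpq x y
      exact lexSum_mk_lt_of_lt (h2 i hpq) _ _
    · rintro i j hij ⟨p, x⟩ ⟨q, y⟩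
      exact lexSum_mk_lt_of_lt (h1 i j hij p q) _ _
  · obtain ⟨q, h0, h1, h2⟩ := hI.spread A (fun a i => ∃ p, w i p = a.1) fun a => hinf a.1 a.2
    have : ∀ k (a : A), ∃ f : F a.1 ↪o Σₗ i, Σₗ p : P i, F (w i p), ∀ y, (f y).1 = q k a := by
      rintro k a
      obtain ⟨p, hp⟩ := h0 k a
      rw [← hp]
      exact ⟨(lexSumMk (A := fun p => F (w (q k a) p)) p).trans
        (lexSumMk (A := fun i => Σₗ p : P i, F (w i p)) (q k a)), fun y => rfl⟩
    choose f hf using this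
    refine ⟨lexSumLift (fun k => lexSumLift (f k) ?_) ?_⟩
    · intro a b hab x y
      refine lexSum_lt_iff.2 (.inl ?_)
      rw [hf, hf]
      exact h2 k hab
    · rintro i j hij ⟨a, x⟩ ⟨b, y⟩
      refine lexSum_lt_iff.2 (.inl ?_)
      change (f i a x).1 < (f j b y).1
      rw [hf, hf]
      exact h1 i j hij a b

/-! ### Finite sums over a family of chains -/

/-- The chain `C` is biembeddable with a finite sum of members of the family `F`, that is, with the
sum of a word `w : P → ι` indexed by a finite chain `P`. -/
def FinSumOf {ι : Type} (F : ι → LinOrd.{0}) (C : Type u) [LinearOrder C] : Prop :=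
  ∃ (P : Type) (_ : LinearOrder P) (_ : Finite P) (w : P → ι), Biembeddable C (Σₗ p, F (w p))

theorem FinSumOf.congr {ι : Type} {F : ι → LinOrd.{0}} {C : Type u} {D : Type v} [LinearOrder C]
    [LinearOrder D] (h : FinSumOf F D) (hCD : Biembeddable C D) : FinSumOf F C := by
  obtain ⟨P, i1, i2, w, h⟩ := h
  exact ⟨P, i1, i2, w, hCD.trans h⟩

theorem FinSumOf.letter {ι : Type} (F : ι → LinOrd.{0}) (a : ι) : FinSumOf F (F a) := by
  refine ⟨Unit, inferInstance, inferInstance, fun _ => a, ⟨lexSumMk (A := fun _ : Unit => F a) ()⟩,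
    ⟨lexSumLift (fun _ => RelEmbedding.refl _) ?_⟩⟩
  intro i j hij
  exact absurd hij (lt_irrefl _)

theorem finSumOf_of_fibers {ι : Type} {F : ι → LinOrd.{0}} {C : Type u} [LinearOrder C] {I : Type}
    [LinearOrder I] [Finite I] (c : C → I) (hc : Monotone c)
    (h : ∀ i, FinSumOf F {x // c x = i}) : FinSumOf F C := by
  choose P i1 i2 w h using h
  exact ⟨Σₗ i, P i, inferInstance, inferInstanceAs (Finite (Σ i, P i)), fun x => w x.1 x.2,
    (biembeddable_lexSum_of_fibers c hc h).trans
      (biembeddable_lexSum_assoc (A := fun i p => F (w i p)))⟩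

theorem biembeddable_subtype_congr {C : Type*} [LinearOrder C] {p : C → Prop}
    {q : {x // p x} → Prop} {r : C → Prop} (h1 : ∀ x : {x // p x}, q x → r x.1)
    (h2 : ∀ x, r x → ∃ h : p x, q ⟨x, h⟩) : Biembeddable {x // q x} {x // r x} :=
  ⟨⟨OrderEmbedding.ofStrictMono (fun x => ⟨x.1.1, h1 _ x.2⟩) fun _ _ h => h⟩,
    ⟨OrderEmbedding.ofStrictMono (fun x => ⟨⟨x.1, (h2 _ x.2).1⟩, (h2 _ x.2).2⟩) fun _ _ h => h⟩⟩

theorem biembeddable_subtype_congr' {C : Type*} [LinearOrder C] {p q : C → Prop}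
    (h : ∀ x, p x ↔ q x) : Biembeddable {x // p x} {x // q x} :=
  ⟨⟨OrderEmbedding.ofStrictMono (fun x => ⟨x.1, (h _).1 x.2⟩) fun _ _ h => h⟩,
    ⟨OrderEmbedding.ofStrictMono (fun x => ⟨x.1, (h _).2 x.2⟩) fun _ _ h => h⟩⟩

/-- The part of `C` lying over the range of an embedding `j : I ↪o ℤ` is biembeddable with the
corresponding partial sum. -/
theorem biembeddable_of_index_embedding {C : Type*} [LinearOrder C] {c : C → ℤ} (hc : Monotone c)
    {A : ℤ → Type} [∀ i, LinearOrder (A i)] (h : ∀ i, Biembeddable {x // c x = i} (A i))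
    {I : Type} [LinearOrder I] (j : I ↪o ℤ) (T : C → Prop) (hT : ∀ x, T x ↔ ∃ i, j i = c x) :
    Biembeddable {x // T x} (Σₗ i, A (j i)) := by
  choose k hk using fun x : {x // T x} => (hT x.1).1 x.2
  refine biembeddable_lexSum_of_fibers k (fun x y hxy => ?_) fun i => .trans ?_ (h (j i))
  · rw [← j.le_iff_le, hk, hk]
    exact hc hxy
  · refine biembeddable_subtype_congr (fun x hx => ?_) fun x hx => ?_
    · rw [← hk, hx]
    · exact ⟨(hT x).2 ⟨i, hx.symm⟩, j.injective ((hk _).trans hx)⟩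

/-- Given a sequence of sets of letters from a finite alphabet, from some point on only letters
occurring infinitely often occur. -/
theorem exists_tail_recurrent {ι : Type} [Finite ι] (L : ℕ → Set ι) :
    ∃ N₀, ∀ N ≥ N₀, ∀ k, ∀ a ∈ L (N + k), {k | a ∈ L (N + k)}.Infinite := by
  have : ({k | ∃ a, {k | a ∈ L k}.Finite ∧ a ∈ L k}).Finite := by
    have h : {k | ∃ a, {k | a ∈ L k}.Finite ∧ a ∈ L k} =
        ⋃ a ∈ {a | {k | a ∈ L k}.Finite}, {k | a ∈ L k} := by
      ext k; simp
    rw [h]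
    exact Set.Finite.biUnion (Set.toFinite _) fun a ha => ha
  obtain ⟨N₀, hN₀⟩ := this.bddAbove
  refine ⟨N₀ + 1, fun N hN k a ha hfin => ?_⟩
  have hfin' : {k | a ∈ L k}.Finite := by
    refine ((Set.finite_Iio N).union (hfin.image (N + ·))).subset fun l hl => ?_
    rcases lt_or_ge l N with h | h
    · exact .inl h
    · obtain ⟨m, rfl⟩ := Nat.exists_eq_add_of_le h
      exact .inr ⟨m, hl, rfl⟩
  have := hN₀ ⟨a, hfin', ha⟩
  omega

/-- The family obtained from `F` by adding, for each set `A` of letters, the sums of `ω` and of `ω*`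
copies of the finite sum `Σₗ a ∈ A, F a`. -/
def nextFamily {ι : Type} [LinearOrder ι] (F : ι → LinOrd.{0}) : ι ⊕ (Set ι ⊕ Set ι) → LinOrd.{0}
  | .inl a => F a
  | .inr (.inl A) => LinOrd.of (Σₗ _ : ℕ, Σₗ a : A, F a.1)
  | .inr (.inr A) => LinOrd.of (Σₗ _ : ℕᵒᵈ, Σₗ a : A, F a.1)

theorem nextFamily_nice {ι : Type} [LinearOrder ι] [Finite ι] {F : ι → LinOrd.{0}}
    (hF : ∀ i, Nonempty (NiceData (F i))) : ∀ i, Nonempty (NiceData (nextFamily F i))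
  | .inl a => hF a
  | .inr (.inl A) => ⟨NiceData.nat.prod (NiceData.finSum fun a : A => (hF a.1).some)⟩
  | .inr (.inr A) => ⟨NiceData.natDual.prod (NiceData.finSum fun a : A => (hF a.1).some)⟩

theorem FinSumOf.next {ι : Type} [LinearOrder ι] {F : ι → LinOrd.{0}} {C : Type u} [LinearOrder C]
    (h : FinSumOf F C) : FinSumOf (nextFamily F) C := by
  obtain ⟨P, i1, i2, w, h⟩ := h
  exact ⟨P, i1, i2, fun p => .inl (w p), h⟩

/-- The induction step: a `ℤ`-indexed sum of finite sums over `F` is biembeddable with a finite sum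
over `nextFamily F`, namely a left tail, finitely many blocks, and a right tail. -/
theorem finSumOf_nextFamily {ι : Type} [LinearOrder ι] [Finite ι] (F : ι → LinOrd.{0})
    {C : Type u} [LinearOrder C] (c : C → ℤ) (hc : Monotone c)
    (h : ∀ i, FinSumOf F {x // c x = i}) : FinSumOf (nextFamily F) C := by
  have hmid := fun i => (h i).next
  choose P i1 i2 w h using h
  obtain ⟨N₁, hN₁⟩ := exists_tail_recurrent fun k : ℕ => Set.range (w k)
  obtain ⟨N₂, hN₂⟩ := exists_tail_recurrent fun k : ℕ => Set.range (w (-k))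
  -- The summand `1` makes `-N` and `N` distinct, so that the two tails are disjoint.
  let N : ℕ := max N₁ N₂ + 1
  have hNle : (-N : ℤ) ≤ N := by omega
  -- Clamping the index to `[-N, N]` leaves the inner blocks unchanged and gathers the tails over
  -- the two endpoints.
  refine finSumOf_of_fibers (fun x => Set.projIcc (-N : ℤ) N hNle (c x))
    ((Set.monotone_projIcc hNle).comp hc) fun i => ?_
  have hproj : ∀ x, Set.projIcc (-N : ℤ) N hNle (c x) = i ↔ max (-N : ℤ) (min N (c x)) = i := by
    intro x
    rw [Subtype.ext_iff, Set.coe_projIcc]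
  obtain ⟨i, hi⟩ := i
  simp only at hproj
  rcases eq_or_ne i N with rfl | hiN
  · let j : ℕ ↪o ℤ := OrderEmbedding.ofStrictMono (fun k => ((N + k : ℕ) : ℤ))
      fun a b hab => by dsimp only; omega
    have hj : ∀ k, j k = ((N + k : ℕ) : ℤ) := fun _ => rfl
    refine (FinSumOf.letter (nextFamily F) (.inr (.inl
      {a | {k | a ∈ Set.range (w (j k))}.Infinite}))).congr ?_
    refine (biembeddable_of_index_embedding hc h j _ fun x => ?_).trans
      (tailOrder_nat.biembeddable F (fun k => P (j k)) (fun k => w (j k)) _ (fun k p =>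
        hN₁ N (by omega) k (w (j k) p) ⟨p, rfl⟩) fun a ha => ha)
    rw [hproj]
    constructor
    · exact fun hx => ⟨(c x - N).toNat, by rw [hj]; omega⟩
    · rintro ⟨k, hk⟩
      rw [hj] at hk
      rw [← hk]
      omega
  rcases eq_or_ne i (-N) with rfl | hiN'
  · let j : ℕᵒᵈ ↪o ℤ := OrderEmbedding.ofStrictMono
      (fun k => -((N + OrderDual.ofDual k : ℕ) : ℤ))
      fun a b hab => by
        have : OrderDual.ofDual b < OrderDual.ofDual a := hab
        dsimp only
        omega
    have hj : ∀ k, j (OrderDual.toDual k) = -((N + k : ℕ) : ℤ) := fun _ => rfl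
    refine (FinSumOf.letter (nextFamily F) (.inr (.inr
      {a | {k | a ∈ Set.range (w (j k))}.Infinite}))).congr ?_
    refine (biembeddable_of_index_embedding hc h j _ fun x => ?_).trans
      (tailOrder_nat.dual.biembeddable F (fun k => P (j k)) (fun k => w (j k)) _ (fun k p =>
        hN₂ N (by omega) (OrderDual.ofDual k) (w (j k) p) ⟨p, rfl⟩) fun a ha => ha)
    rw [hproj]
    constructor
    · exact fun hx => ⟨OrderDual.toDual (-N - c x).toNat, by rw [hj]; omega⟩
    · rintro ⟨k, hk⟩
      rw [← OrderDual.toDual_ofDual k, hj] at hk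
      rw [← hk]
      omega
  · refine (hmid i).congr (biembeddable_subtype_congr' fun x => ?_)
    rw [hproj]
    have := hi.1
    have := hi.2
    omega

/-! ### Induction on the Hausdorff rank -/

/-- The Hausdorff hierarchy is increasing. -/
theorem InHausdorff.mono {m n : ℕ} (hmn : m ≤ n) :
    ∀ (C : Type u) [LinearOrder C], InHausdorff m C → InHausdorff n C := by
  intro C _ h
  rcases m with _ | m
  · rcases n with _ | n
    · exact h
    · rw [InHausdorff] at h
      rw [InHausdorff]
      refine ⟨fun _ => 0, monotone_const, fun i => ⟨0, Nat.zero_le _, ?_⟩⟩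
      change InHausdorff 0 {x : C // 0 = i}
      rw [InHausdorff]
      infer_instance
  · obtain ⟨n, rfl⟩ : ∃ n', n = n' + 1 := ⟨n - 1, by omega⟩
    rw [InHausdorff] at h ⊢
    obtain ⟨c, hc, h⟩ := h
    refine ⟨c, hc, fun i => ?_⟩
    obtain ⟨m', hm', h⟩ := h i
    exact ⟨m', by omega, h⟩

/-- Every chain in `H_n` is, up to biembeddability, a finite sum over a finite family of nice chains
that depends only on `n`. -/
theorem exists_nice_family (n : ℕ) : ∃ (ι : Type) (_ : Finite ι) (F : ι → LinOrd.{0}),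
    (∀ i, Nonempty (NiceData (F i))) ∧
      ∀ (C : Type u) [LinearOrder C], InHausdorff n C → FinSumOf F C := by
  induction n with
  | zero =>
    refine ⟨Unit, inferInstance, fun _ => LinOrd.of Unit, fun _ => ⟨NiceData.unit⟩, ?_⟩
    intro C _ h
    rw [InHausdorff] at h
    rcases isEmpty_or_nonempty C with hC | ⟨⟨x⟩⟩
    · exact ⟨Empty, inferInstance, inferInstance, fun _ => (),
        ⟨OrderEmbedding.ofIsEmpty⟩, ⟨lexSumLift (fun p => p.elim) fun p => p.elim⟩⟩
    · refine (FinSumOf.letter (fun _ : Unit => LinOrd.of Unit) ()).congr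
        ⟨⟨OrderEmbedding.ofStrictMono (fun _ => ()) fun a b hab => ?_⟩,
          ⟨OrderEmbedding.ofStrictMono (fun _ => x) fun a b hab => ?_⟩⟩
      · exact absurd hab (by rw [Subsingleton.elim a b]; exact lt_irrefl b)
      · exact absurd hab (lt_irrefl ())
  | succ n ih =>
    obtain ⟨ι, _, F, hF, h⟩ := ih
    obtain ⟨m, ⟨e⟩⟩ := Finite.exists_equiv_fin ι
    let : LinearOrder ι := LinearOrder.lift' e e.injective
    refine ⟨_, inferInstance, nextFamily F, nextFamily_nice hF, fun C _ hC => ?_⟩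
    rw [InHausdorff] at hC
    obtain ⟨c, hc, hfib⟩ := hC
    refine finSumOf_nextFamily F c hc fun i => ?_
    obtain ⟨m, hm, hi⟩ := hfib i
    exact h _ (InHausdorff.mono hm _ hi)

/-- Every countable scattered chain of finite Hausdorff rank has finite big Ramsey degrees:
for every `n ≥ 1` there is `t ∈ ℕ` such that `C ⟶ (C)^n_{k,t}` for every `k ∈ ℕ`. -/
theorem scattered_finite_rank_has_finite_bigRamsey_degrees
    (C : Type u) [LinearOrder C] [Countable C]
    (hscat : Scattered C) (hrank : FiniteHausdorffRank C) :
    ∀ n : ℕ, 1 ≤ n → ∃ t : ℕ, ∀ (k : ℕ) (χ : (Fin n ↪o C) → Fin k),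
      ∃ w : C ↪o C, (Set.range fun f : Fin n ↪o C => χ (f.trans w)).ncard ≤ t := by
  intro n _
  obtain ⟨r, hr⟩ := hrank
  obtain ⟨ι, _, F, hF, h⟩ := exists_nice_family.{u} r
  obtain ⟨P, _, _, w, ⟨φ⟩, ⟨ψ⟩⟩ := h C hr
  obtain ⟨t, ht⟩ := (NiceData.finSum fun p => (hF (w p)).some).bigRamsey n
  refine ⟨t, fun k χ => ?_⟩
  obtain ⟨v, hv⟩ := ht k fun f => χ (f.trans ψ)
  refine ⟨(φ.trans v).trans ψ, (Set.ncard_le_ncard ?_ (Set.toFinite _)).trans hv⟩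
  rintro _ ⟨f, rfl⟩
  exact ⟨f.trans φ, rfl⟩
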